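/- arXiv:2401.02350 — 2 statements merged into one kernel-verified Lean document; each statement's English description precedes it below -/
import Mathlib

section
/- Let A be a countable commutative noetherian ring. Then there are only countably many isomorphism classes of objects X in the derived category of A-modules such that every homology module H^n(X) is a finitely generated A-module and H^n(X) = 0 for all but finitely many integers n. Equivalently, the set of isomorphism classes of the bounded derived category D^b(mod A) is countable. -/
open CategoryTheory Limits

/-!
Call `M[-n]`, with `M` finitely generated, a stalk complex. Truncation exhibits every object with
bounded finitely generated homology as an iterated extension of stalk complexes, and the middle
term of a distinguished triangle is determined up to isomorphism by its connecting morphism. There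
are only countably many stalk complexes up to isomorphism, so it suffices to bound the connecting
morphisms. Those between stalk complexes lie in `Ext` groups of finitely generated modules, which
are countable by dimension shifting along finitely generated free presentations, and the long exact
sequence extends this to morphisms from an iterated extension to a stalk complex.
-/

section

open Pretriangulated ObjectProperty DerivedCategory Abelian

universe w w' v v' u u'

section EssentiallyCountable

variable {C : Type u} [Category.{v} C] {D : Type u'} [Category.{v'} D]

/-- A property of objects is essentially countable if the objects satisfying it form only
countably many isomorphism classes of the ambient category. -/
def IsEssentiallyCountable (P : ObjectProperty C) : Prop :=
  (Quotient.mk (isIsomorphicSetoid C) '' {X | P X}).Countable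

namespace IsEssentiallyCountable

variable {P Q : ObjectProperty C}

lemma of_family {ι : Type*} [Countable ι] (Y : ι → C)
    (hY : ∀ X, P X → ∃ i, Nonempty (X ≅ Y i)) : IsEssentiallyCountable P := by
  refine (Set.countable_range fun i ↦ Quotient.mk (isIsomorphicSetoid C) (Y i)).mono ?_
  rintro _ ⟨X, hX, rfl⟩
  obtain ⟨i, hi⟩ := hY X hX
  exact ⟨i, Quotient.sound ⟨hi.some.symm⟩⟩

lemma exists_representatives (hP : IsEssentiallyCountable P) :
    ∃ S : Set C, S.Countable ∧ (∀ Y ∈ S, P Y) ∧ ∀ X, P X → ∃ Y ∈ S, Nonempty (X ≅ Y) := by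
  obtain ⟨S, hSP, hS⟩ := Set.exists_subset_bijOn {X | P X} (Quotient.mk (isIsomorphicSetoid C))
  refine ⟨S, Set.countable_of_injective_of_countable_image hS.injOn (hS.image_eq ▸ hP), hSP, ?_⟩
  intro X hX
  obtain ⟨Y, hY, hYX⟩ := hS.surjOn ⟨X, hX, rfl⟩
  exact ⟨Y, hY, ⟨(Quotient.exact hYX).some.symm⟩⟩

lemma exists_family (hP : IsEssentiallyCountable P) :
    ∃ (ι : Type) (_ : Countable ι) (Y : ι → C), ∀ X, P X → ∃ i, Nonempty (X ≅ Y i) := by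
  obtain ⟨S, hS, -, hSP⟩ := hP.exists_representatives
  have := hS.to_subtype
  let e : S ≃ Shrink.{0} S := equivShrink.{0} S
  refine ⟨Shrink.{0} S, e.symm.injective.countable, fun i ↦ e.symm i, fun X hX ↦ ?_⟩
  obtain ⟨Y, hY, hXY⟩ := hSP X hX
  exact ⟨e ⟨Y, hY⟩, by simpa using hXY⟩

lemma mono (hQ : IsEssentiallyCountable Q) (h : P ≤ Q) : IsEssentiallyCountable P :=
  Set.Countable.mono (Set.image_mono h) hQ

lemma iSup {ι : Type*} [Countable ι] {P : ι → ObjectProperty C}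
    (hP : ∀ i, IsEssentiallyCountable (P i)) : IsEssentiallyCountable (⨆ i, P i) := by
  refine (Set.countable_iUnion hP).mono ?_
  rintro _ ⟨X, hX, rfl⟩
  obtain ⟨i, hi⟩ := (prop_iSup_iff P X).1 hX
  exact Set.mem_iUnion.2 ⟨i, X, hi, rfl⟩

lemma map (hP : IsEssentiallyCountable P) (F : C ⥤ D) : IsEssentiallyCountable (P.map F) := by
  obtain ⟨ι, _, Y, hY⟩ := hP.exists_family
  refine of_family (fun i ↦ F.obj (Y i)) ?_
  rintro _ ⟨X, hX, ⟨e⟩⟩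
  obtain ⟨i, ⟨e'⟩⟩ := hY X hX
  exact ⟨i, ⟨e.symm ≪≫ F.mapIso e'⟩⟩

end IsEssentiallyCountable

end EssentiallyCountable

section Pretriangulated

lemma countable_of_exact {α G H : Type*} [AddGroup G] [AddGroup H] [Countable α] [Countable H]
    {f : α → G} {g : G →+ H} (hfg : Function.Exact f g) : Countable G := by
  have : Countable g.ker := by
    refine ((Set.countable_range f).mono fun y hy ↦ ?_).to_subtype
    exact (hfg y).1 hy
  have : Countable (G ⧸ g.ker) := (QuotientAddGroup.kerLift_injective g).countable
  exact AddSubgroup.addGroupEquivQuotientProdAddSubgroup (s := g.ker).injective.countable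

variable {T : Type u} [Category.{v} T] [Preadditive T] [HasZeroObject T] [HasShift T ℤ]
  [∀ n : ℤ, (shiftFunctor T n).Additive] [Pretriangulated T] {P Q : ObjectProperty T}

lemma IsEssentiallyCountable.extensionProduct (hP : IsEssentiallyCountable P)
    (hQ : IsEssentiallyCountable Q)
    (hom_countable : ∀ Y Z, P Y → Q Z → Countable (Z ⟶ Y⟦(1 : ℤ)⟧)) :
    IsEssentiallyCountable (extensionProduct P Q) := by
  obtain ⟨R, hR, hRP, hPR⟩ := hP.exists_representatives
  obtain ⟨S, hS, hSQ, hQS⟩ := hQ.exists_representatives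
  have := hR.to_subtype
  have := hS.to_subtype
  have (Y : R) (Z : S) := hom_countable Y Z (hRP Y Y.2) (hSQ Z Z.2)
  choose E i p hE using fun (Y Z : T) (h : Z ⟶ Y⟦(1 : ℤ)⟧) ↦ distinguished_cocone_triangle₂ h
  refine .of_family (ι := Σ (Y : R) (Z : S), Z.1 ⟶ Y.1⟦(1 : ℤ)⟧) (fun x ↦ E _ _ x.2.2) ?_
  rintro X ⟨Y, Z, f, g, h, hX, hY, hZ⟩
  obtain ⟨Y', hY', ⟨eY⟩⟩ := hPR Y hY
  obtain ⟨Z', hZ', ⟨eZ⟩⟩ := hQS Z hZ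
  let h' := eZ.inv ≫ h ≫ eY.hom⟦(1 : ℤ)⟧'
  have comm : h ≫ eY.hom⟦(1 : ℤ)⟧' = eZ.hom ≫ h' := by simp [h']
  exact ⟨⟨⟨Y', hY'⟩, ⟨Z', hZ'⟩, h'⟩,
    ⟨Triangle.π₂.mapIso (isoTriangleOfIso₁₃ _ _ hX (hE Y' Z' h') eY eZ comm)⟩⟩

lemma countable_hom_of_distTriang (X : T) (A : Triangle T) (hA : A ∈ distTriang T)
    (h₁ : Countable (A.obj₁ ⟶ X)) (h₃ : Countable (A.obj₃ ⟶ X)) : Countable (A.obj₂ ⟶ X) := by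
  have exact_at_obj₂ : Function.Exact (fun a : A.obj₃ ⟶ X ↦ A.mor₂ ≫ a)
      (Preadditive.leftComp X A.mor₁) := by
    intro b
    constructor
    · intro hb
      obtain ⟨a, rfl⟩ := A.yoneda_exact₂ hA b hb
      exact ⟨a, rfl⟩
    · rintro ⟨a, rfl⟩
      change A.mor₁ ≫ A.mor₂ ≫ a = 0
      rw [comp_distTriang_mor_zero₁₂_assoc _ hA, zero_comp]
  exact countable_of_exact exact_at_obj₂

lemma countable_hom_of_extensionProductIter
    (hom_countable : ∀ X Y, P X → P Y → Countable (X ⟶ Y)) (n : ℕ) {X Y : T}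
    (hX : P.extensionProductIter n X) (hY : P Y) : Countable (X ⟶ Y) := by
  induction n generalizing X with
  | zero => exact hom_countable X Y hX hY
  | succ n ih =>
    rw [extensionProductIter_succ] at hX
    obtain ⟨X₁, X₃, f, g, h, hT, hX₁, hX₃⟩ := hX
    exact countable_hom_of_distTriang Y (Triangle.mk f g h) hT (hom_countable X₁ Y hX₁ hY) (ih hX₃)

lemma IsEssentiallyCountable.extensionProductIter [P.IsStableUnderShift ℤ]
    (hP : IsEssentiallyCountable P) (hom_countable : ∀ X Y, P X → P Y → Countable (X ⟶ Y))
    (n : ℕ) : IsEssentiallyCountable (P.extensionProductIter n) := by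
  induction n with
  | zero => exact hP
  | succ n ih =>
    rw [extensionProductIter_succ]
    exact hP.extensionProduct ih fun Y Z hY hZ ↦
      countable_hom_of_extensionProductIter hom_countable n hZ (P.le_shift (1 : ℤ) Y hY)

end Pretriangulated

section Ext

variable {C : Type u} [Category.{v} C] [Abelian C] {P : ObjectProperty C}

/- Dimension shifting: `Ext^(n+1)(M, N)` is a quotient of `Ext^n(K, N)` for a syzygy `K` of `M`. -/
lemma countable_ext_of_syzygies [HasExt.{w} C] {N : C}
    (hom_countable : ∀ M, P M → Countable (M ⟶ N))
    (exists_syzygy : ∀ M, P M → ∃ S : ShortComplex C,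
      S.ShortExact ∧ S.X₃ = M ∧ Projective S.X₂ ∧ P S.X₁)
    (n : ℕ) {M : C} (hM : P M) : Countable (Ext.{w} M N n) := by
  induction n generalizing M with
  | zero =>
    have := hom_countable M hM
    exact Ext.homEquiv₀.injective.countable
  | succ n ih =>
    obtain ⟨S, hS, rfl, _, hK⟩ := exists_syzygy M hM
    have := ih hK
    have connecting_surjective : Function.Surjective
        fun x : Ext.{w} S.X₁ N n ↦ hS.extClass.comp x (add_comm 1 n) :=
      fun y ↦ Ext.contravariant_sequence_exact₃ hS N y (Ext.eq_zero_of_projective _) (add_comm 1 n)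
    exact connecting_surjective.countable

end Ext

section DerivedCategory

variable {C : Type u} [Category.{v} C] [Abelian C] [HasDerivedCategory.{w} C]

section Truncation

open TStructure

variable (X : DerivedCategory C)

lemma isIso_homologyMap_truncLEι {a n : ℤ} (h : n ≤ a) :
    IsIso ((homologyFunctor C n).map ((t.truncLEι a).app X)) := by
  have hT := t.triangleLEGE_distinguished a (a + 1) rfl X
  have vanishing (i : ℤ) (hi : i ≤ a) :
      IsZero ((homologyFunctor C i).obj ((t.truncGE (a + 1)).obj X)) :=
    isZero_of_isGE _ (a + 1) i (by lia)
  have : Mono ((homologyFunctor C n).map ((t.truncLEι a).app X)) :=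
    (HomologySequence.mono_homologyMap_mor₁_iff _ hT (n - 1) n).2
      ((vanishing (n - 1) (by lia)).eq_of_src _ _)
  have : Epi ((homologyFunctor C n).map ((t.truncLEι a).app X)) :=
    (HomologySequence.epi_homologyMap_mor₁_iff _ hT n).2 ((vanishing n h).eq_of_tgt _ _)
  exact isIso_of_mono_of_epi _

lemma isIso_homologyMap_truncGEπ {b n : ℤ} (h : b ≤ n) :
    IsIso ((homologyFunctor C n).map ((t.truncGEπ b).app X)) := by
  have hT := t.triangleLEGE_distinguished (b - 1) b (by lia) X
  have vanishing (i : ℤ) (hi : b ≤ i) :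
      IsZero ((homologyFunctor C i).obj ((t.truncLE (b - 1)).obj X)) :=
    isZero_of_isLE _ (b - 1) i (by lia)
  have : Mono ((homologyFunctor C n).map ((t.truncGEπ b).app X)) :=
    (HomologySequence.mono_homologyMap_mor₂_iff _ hT n).2 ((vanishing n h).eq_of_src _ _)
  have : Epi ((homologyFunctor C n).map ((t.truncGEπ b).app X)) :=
    (HomologySequence.epi_homologyMap_mor₂_iff _ hT n (n + 1)).2
      ((vanishing (n + 1) (by lia)).eq_of_tgt _ _)
  exact isIso_of_mono_of_epi _

lemma exists_isGE_isLE_of_finite_homology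
    (hX : {n : ℤ | ¬ IsZero ((homologyFunctor C n).obj X)}.Finite) :
    ∃ (a : ℤ) (k : ℕ), X.IsGE a ∧ X.IsLE (a + k) := by
  obtain ⟨a, ha⟩ := hX.bddBelow
  obtain ⟨b, hb⟩ := hX.bddAbove
  refine ⟨a, (b - a).toNat, (isGE_iff X a).2 fun i hi ↦ ?_, (isLE_iff X _).2 fun i hi ↦ ?_⟩
  · by_contra h
    exact absurd (ha h) (by lia)
  · by_contra h
    exact absurd (hb h) (by lia)

end Truncation

variable (P : ObjectProperty C)

/-- The stalk complexes `M[-n]` with `M` satisfying `P` and `n : ℤ`, up to isomorphism: the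
building blocks of the objects with bounded homology in `P`. -/
def stalkComplexes : ObjectProperty (DerivedCategory C) :=
  ⨆ n : ℤ, P.map (singleFunctor C n)

/-- The objects with homology in `P` in every degree, nonzero in only finitely many. -/
def boundedHomologyIn : ObjectProperty (DerivedCategory C) := fun X ↦
  (∀ n : ℤ, P ((homologyFunctor C n).obj X)) ∧
    {n : ℤ | ¬ IsZero ((homologyFunctor C n).obj X)}.Finite

variable {P}

lemma stalkComplexes_iff {X : DerivedCategory C} :
    stalkComplexes P X ↔ ∃ (n : ℤ) (M : C), P M ∧ Nonempty ((singleFunctor C n).obj M ≅ X) :=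
  prop_iSup_iff _ X

instance : (stalkComplexes P).IsStableUnderShift ℤ where
  isStableUnderShiftBy a :=
    { le_shift X hX := by
        obtain ⟨n, M, hM, ⟨e⟩⟩ := stalkComplexes_iff.1 hX
        let shift_single := ((singleFunctors C).shiftIso a (n - a) n (by lia)).app M
        exact stalkComplexes_iff.2
          ⟨n - a, M, hM, ⟨shift_single.symm ≪≫ (shiftFunctor _ a).mapIso e⟩⟩ }

lemma IsEssentiallyCountable.stalkComplexes (hP : IsEssentiallyCountable P) :
    IsEssentiallyCountable (stalkComplexes P) :=
  .iSup fun n ↦ hP.map (singleFunctor C n)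

/-- Shifting by `n` turns morphisms between stalk complexes in degrees `n ≥ m` into elements
of `Ext^(n - m)`. -/
noncomputable def extEquivSingleHom [HasExt.{w'} C] (M N : C) (n m : ℤ) (k : ℕ) (h : n = m + k) :
    Ext.{w'} M N k ≃ ((singleFunctor C n).obj M ⟶ (singleFunctor C m).obj N) :=
  Ext.homEquiv.trans <| .trans
    (Iso.homCongr (((singleFunctors C).shiftIso n 0 n (by simp)).app M).symm
      (((singleFunctors C).shiftIso (k : ℤ) (-k) 0 (by simp)).app N ≪≫
        (((singleFunctors C).shiftIso n (-k) m (by lia)).app N).symm))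
    (Functor.FullyFaithful.ofFullyFaithful (shiftFunctor (DerivedCategory C) n)).homEquiv.symm

lemma countable_hom_singleFunctor [HasExt.{w'} C] {M N : C}
    (ext_countable : ∀ n, Countable (Ext.{w'} M N n)) (n m : ℤ) :
    Countable ((singleFunctor C n).obj M ⟶ (singleFunctor C m).obj N) := by
  obtain hnm | hmn := lt_or_ge n m
  · have : Subsingleton ((singleFunctor C n).obj M ⟶ (singleFunctor C m).obj N) :=
      ⟨fun f g ↦ (TStructure.t.zero f n m hnm).trans (TStructure.t.zero g n m hnm).symm⟩
    infer_instance
  · exact (extEquivSingleHom M N n m (n - m).toNat (by lia)).symm.injective.countable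

lemma countable_hom_of_stalkComplexes [HasExt.{w'} C]
    (ext_countable : ∀ M N, P M → P N → ∀ n, Countable (Ext.{w'} M N n))
    (X Y : DerivedCategory C) (hX : stalkComplexes P X) (hY : stalkComplexes P Y) :
    Countable (X ⟶ Y) := by
  obtain ⟨n, M, hM, ⟨eX⟩⟩ := stalkComplexes_iff.1 hX
  obtain ⟨m, N, hN, ⟨eY⟩⟩ := stalkComplexes_iff.1 hY
  have := countable_hom_singleFunctor (ext_countable M N hM hN) n m
  exact (eX.homCongr eY).symm.injective.countable

variable [P.IsClosedUnderIsomorphisms]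

lemma stalkComplexes_of_isGE_of_isLE (X : DerivedCategory C) (n : ℤ) [X.IsGE n] [X.IsLE n]
    (hX : P ((homologyFunctor C n).obj X)) : stalkComplexes P X := by
  obtain ⟨M, ⟨e⟩⟩ := exists_iso_singleFunctor_obj_of_isGE_of_isLE X n
  let homology_iso : (homologyFunctor C n).obj X ≅ M :=
    (homologyFunctor C n).mapIso e ≪≫ (singleFunctorCompHomologyFunctorIso C n).app M
  exact stalkComplexes_iff.2 ⟨n, M, P.prop_of_iso homology_iso hX, ⟨e.symm⟩⟩

lemma extensionProductIter_stalkComplexes (k : ℕ) (a : ℤ) (X : DerivedCategory C)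
    [X.IsGE a] [X.IsLE (a + k)] (hX : ∀ n, a ≤ n → P ((homologyFunctor C n).obj X)) :
    (stalkComplexes P).extensionProductIter k X := by
  induction k generalizing a X with
  | zero =>
    have : X.IsLE a := by simpa using ‹X.IsLE (a + (0 : ℕ))›
    exact stalkComplexes_of_isGE_of_isLE X a (hX a le_rfl)
  | succ k ih =>
    let t : Triangulated.TStructure (DerivedCategory C) := TStructure.t
    have bottom : stalkComplexes P ((t.truncLE a).obj X) := by
      have := isIso_homologyMap_truncLEι X (le_refl a)
      refine stalkComplexes_of_isGE_of_isLE _ a ?_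
      exact P.prop_of_iso (asIso ((homologyFunctor C a).map ((t.truncLEι a).app X))).symm
        (hX a le_rfl)
    have top : (stalkComplexes P).extensionProductIter k ((t.truncGE (a + 1)).obj X) := by
      have : ((t.truncGE (a + 1)).obj X).IsLE (a + 1 + k) := by
        have : X.IsLE (a + 1 + k) := by convert ‹X.IsLE _› using 1; push_cast; ring
        infer_instance
      refine ih (a + 1) _ fun n hn ↦ ?_
      have := isIso_homologyMap_truncGEπ X hn
      exact P.prop_of_iso (asIso ((homologyFunctor C n).map ((t.truncGEπ (a + 1)).app X)))
        (hX n (by lia))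
    rw [extensionProductIter_succ]
    exact ⟨_, _, _, _, _, t.triangleLEGE_distinguished a (a + 1) rfl X, bottom, top⟩

theorem IsEssentiallyCountable.boundedHomologyIn [HasExt.{w'} C] (hP : IsEssentiallyCountable P)
    (ext_countable : ∀ M N, P M → P N → ∀ n, Countable (Ext.{w'} M N n)) :
    IsEssentiallyCountable (boundedHomologyIn P) := by
  have iter_countable (k : ℕ) :
      IsEssentiallyCountable ((_root_.stalkComplexes P).extensionProductIter k) :=
    hP.stalkComplexes.extensionProductIter (countable_hom_of_stalkComplexes ext_countable) k
  refine (IsEssentiallyCountable.iSup iter_countable).mono fun X ⟨hX, hX_finite⟩ ↦ ?_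
  obtain ⟨a, k, _, _⟩ := exists_isGE_isLE_of_finite_homology X hX_finite
  exact (prop_iSup_iff _ X).2 ⟨k, extensionProductIter_stalkComplexes k a X fun n _ ↦ hX n⟩

end DerivedCategory

section Module

lemma countable_linearMap_of_finite {R M N : Type*} [Semiring R] [AddCommMonoid M]
    [AddCommMonoid N] [Module R M] [Module R N] [Module.Finite R M] [Countable N] :
    Countable (M →ₗ[R] N) := by
  obtain ⟨s, hs⟩ := Module.Finite.fg_top (R := R) (M := M)
  have restrict_injective : Function.Injective fun (f : M →ₗ[R] N) (x : s) ↦ f x :=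
    fun f g hfg ↦ LinearMap.ext_on hs fun x hx ↦ congrFun hfg ⟨x, hx⟩
  exact restrict_injective.countable

lemma countable_submodule_of_isNoetherian {R M : Type*} [Semiring R] [AddCommMonoid M]
    [Module R M] [IsNoetherian R M] [Countable M] : Countable (Submodule R M) := by
  have span_surjective : Function.Surjective
      fun s : Finset M ↦ Submodule.span R (s : Set M) :=
    fun N ↦ IsNoetherian.noetherian N
  exact span_surjective.countable

variable {R : Type u} [Ring R]

instance : (ModuleCat.isFG.{v} R).IsClosedUnderIsomorphisms where
  of_iso e (_ : Module.Finite R _) := Module.Finite.equiv e.toLinearEquiv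

lemma isEssentiallyCountable_isFG [IsNoetherianRing R] [Countable R] :
    IsEssentiallyCountable (ModuleCat.isFG.{v} R) := by
  have (n : ℕ) : Countable (Submodule R (Fin n → R)) := countable_submodule_of_isNoetherian
  refine .of_family (ι := Σ n : ℕ, Submodule R (Fin n → R))
    (fun x ↦ ModuleCat.of R (Shrink.{v} ((Fin x.1 → R) ⧸ x.2))) fun M (_ : Module.Finite R M) ↦ ?_
  obtain ⟨n, f, hf⟩ := Module.Finite.exists_fin' R M
  exact ⟨⟨n, LinearMap.ker f⟩, ⟨LinearEquiv.toModuleIso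
    ((f.quotKerEquivOfSurjective hf).symm.trans (Shrink.linearEquiv R _).symm)⟩⟩

lemma exists_shortExact_projective_isFG [IsNoetherianRing R] [Small.{v} R] (M : ModuleCat.{v} R)
    (hM : ModuleCat.isFG R M) : ∃ S : ShortComplex (ModuleCat.{v} R),
      S.ShortExact ∧ S.X₃ = M ∧ Projective S.X₂ ∧ ModuleCat.isFG R S.X₁ := by
  have : Module.Finite R M := hM
  obtain ⟨n, f, hf⟩ := Module.Finite.exists_fin' R M
  let e := Shrink.linearEquiv.{v} R (Fin n → R)
  have : Module.Finite R (Shrink.{v} (Fin n → R)) := Module.Finite.equiv e.symm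
  have : Module.Projective R (Shrink.{v} (Fin n → R)) := Module.Projective.of_equiv e.symm
  let p : Shrink.{v} (Fin n → R) →ₗ[R] M := f ∘ₗ e.toLinearMap
  have hp : Function.Surjective p := hf.comp e.surjective
  exact ⟨p.shortComplexKer, LinearMap.shortExact_shortComplexKer hp, rfl, inferInstance,
    inferInstanceAs (Module.Finite R (LinearMap.ker p))⟩

lemma countable_ext_of_isFG [IsNoetherianRing R] [Countable R] [HasExt.{w} (ModuleCat.{v} R)]
    {M N : ModuleCat.{v} R} [Countable N] (hM : ModuleCat.isFG R M) (n : ℕ) :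
    Countable (Ext.{w} M N n) :=
  countable_ext_of_syzygies (P := ModuleCat.isFG.{v} R)
    (fun L (_ : Module.Finite R L) ↦
      have : Countable (L →ₗ[R] N) := countable_linearMap_of_finite
      ModuleCat.hom_injective.countable)
    exists_shortExact_projective_isFG n hM

end Module

theorem countable_isoClasses_bounded_derivedCategory_general
    (A : Type u) [Ring A] [IsNoetherianRing A] [Countable A]
    [HasDerivedCategory.{w} (ModuleCat.{v} A)] :
    ∃ (ι : Type) (_ : Countable ι)
      (Y : ι → DerivedCategory (ModuleCat.{v} A)),
      ∀ X : DerivedCategory (ModuleCat.{v} A),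
        (∀ n : ℤ, Module.Finite A ((DerivedCategory.homologyFunctor (ModuleCat A) n).obj X)) →
        {n : ℤ | ¬ IsZero ((DerivedCategory.homologyFunctor (ModuleCat A) n).obj X)}.Finite →
        ∃ i, Nonempty (X ≅ Y i) := by
  have := hasExt_of_hasDerivedCategory (ModuleCat.{v} A)
  have ext_countable (M N : ModuleCat.{v} A) (hM : ModuleCat.isFG A M)
      (hN : ModuleCat.isFG A N) (n : ℕ) : Countable (Ext.{w} M N n) :=
    have : Module.Finite A N := hN
    have : Countable N := Finsupp.Countable.of_moduleFinite (R := A)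
    countable_ext_of_isFG hM n
  obtain ⟨ι, hι, Y, hY⟩ :=
    (isEssentiallyCountable_isFG.boundedHomologyIn ext_countable).exists_family
  exact ⟨ι, hι, Y, fun X h_fg h_finite ↦ hY X ⟨h_fg, h_finite⟩⟩

end

/-- Let `A` be a countable commutative noetherian ring. Then there are only countably
many isomorphism classes of objects `X` of the derived category of `A`-modules whose
homology modules are all finitely generated and vanish in all but finitely many
degrees: there is a countable family of such objects meeting every isomorphism class. -/
theorem countable_isoClasses_bounded_derivedCategory
    (A : Type) [CommRing A] [IsNoetherianRing A] [Countable A]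
    [HasDerivedCategory (ModuleCat A)] :
    ∃ (ι : Type) (_ : Countable ι)
      (Y : ι → DerivedCategory (ModuleCat A)),
      ∀ X : DerivedCategory (ModuleCat A),
        (∀ n : ℤ, Module.Finite A ((DerivedCategory.homologyFunctor (ModuleCat A) n).obj X)) →
        {n : ℤ | ¬ IsZero ((DerivedCategory.homologyFunctor (ModuleCat A) n).obj X)}.Finite →
        ∃ i, Nonempty (X ≅ Y i) :=
  countable_isoClasses_bounded_derivedCategory_general A
end

section
/- Let A be a commutative noetherian local ring that is complete with respect to its maximal ideal. If the Krull dimension of A is at least 2, then there exists an uncountable family of elements (a_u)_{u ∈ U} of A such that for all u ≠ v the radical of the principal ideal (a_u) differs from the radical of the principal ideal (a_v). -/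
/-!
The maximal ideal may be replaced by any proper ideal `I` of height at least two for which the
noetherian ring `A` is `I`-adically complete. Suppose that the radicals of principal ideals form a
countable set. Only countably many primes are then minimal over some principal ideal, and each of
them has height at most one by Krull's Hauptidealsatz, hence does not contain `I`. Their union
however contains `I`, since every `x ∈ I` lies in a minimal prime over `(x)`. This contradicts
countable prime avoidance, which is Baire's theorem for the complete `I`-adic topology: every ideal
is closed by Krull's intersection theorem, and an ideal with nonempty interior contains a power
of `I`.
-/

open scoped Topology Uniformity

section AdicTopology

variable {A : Type*} [CommRing A] {I : Ideal A}

theorem baireSpace_of_isAdic [UniformSpace A] [IsUniformAddGroup A] [IsPrecomplete I A]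
    (hI : IsAdic I) : BaireSpace A := by
  have : CompleteSpace A := hI.isPrecomplete_iff.mp inferInstance
  have : (𝓝 (0 : A)).IsCountablyGenerated := hI.hasBasis_nhds_zero.isCountablyGenerated
  have : (𝓤 A).IsCountablyGenerated := IsUniformAddGroup.uniformity_countably_generated
  let _ : PseudoMetricSpace A := UniformSpace.pseudoMetricSpace A
  infer_instance

theorem isClosed_ideal_of_isAdic [TopologicalSpace A] [IsNoetherianRing A] (hI : IsAdic I)
    (hjac : I ≤ (⊥ : Ideal A).jacobson) (J : Ideal A) : IsClosed (J : Set A) := by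
  refine isClosed_of_closure_subset fun x hx => ?_
  have : IsHausdorff I (A ⧸ J) := .of_le_jacobson I _ hjac
  refine Ideal.Quotient.eq_zero_iff_mem.mp (IsHausdorff.haus this _ fun n => ?_)
  obtain ⟨_, ⟨y, hy, rfl⟩, hxy⟩ :
      (((x + ·) '' ((I ^ n : Ideal A) : Set A)) ∩ (J : Set A)).Nonempty :=
    mem_closure_iff_nhds_basis' (hI.hasBasis_nhds x) |>.mp hx n trivial
  have hmk : Ideal.Quotient.mk J x = (-y) • (1 : A ⧸ J) := by
    rw [Algebra.smul_def, mul_one, Ideal.Quotient.algebraMap_eq,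
      Ideal.Quotient.mk_eq_mk_iff_sub_mem, sub_neg_eq_add]
    exact hxy
  rw [SModEq.zero, hmk]
  exact Submodule.smul_mem_smul (neg_mem hy) Submodule.mem_top

variable [TopologicalSpace A] [ContinuousAdd A]

theorem isOpen_of_isAdic (hI : IsAdic I) : IsOpen (I : Set A) :=
  I.toAddSubgroup.isOpen_of_mem_nhds (g := 0) <|
    hI.hasBasis_nhds_zero.mem_iff.mpr ⟨1, trivial, (pow_one I).le⟩

theorem le_radical_of_isAdic_of_nonempty_interior (hI : IsAdic I) {J : Ideal A}
    (hJ : (interior (J : Set A)).Nonempty) : I ≤ J.radical := by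
  obtain ⟨x, hx⟩ := hJ
  have hopen : IsOpen (J : Set A) :=
    J.toAddSubgroup.isOpen_of_mem_nhds (mem_interior_iff_mem_nhds.mp hx)
  obtain ⟨n, -, hn⟩ := hI.hasBasis_nhds_zero.mem_iff.mp (hopen.mem_nhds J.zero_mem)
  exact fun y hy => ⟨n, hn (Ideal.pow_mem_pow hy n)⟩

end AdicTopology

section Noetherian

variable {A : Type*} [CommRing A] [IsNoetherianRing A] {I : Ideal A}

theorem exists_le_radical_of_subset_biUnion_of_countable [IsAdicComplete I A]
    {S : Set (Ideal A)} (hS : S.Countable) (hIS : (I : Set A) ⊆ ⋃ J ∈ S, (J : Set A)) :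
    ∃ J ∈ S, I ≤ J.radical := by
  let _ : WithIdeal A := ⟨I⟩
  have hI : IsAdic I := rfl
  have : BaireSpace A := baireSpace_of_isAdic hI
  by_contra! hnot
  have hdense : Dense (⋂ J ∈ S, (J : Set A)ᶜ) := by
    refine dense_biInter_of_isOpen (fun J _ => ?_) hS fun J hJ => ?_
    · exact (isClosed_ideal_of_isAdic hI (IsAdicComplete.le_jacobson_bot I) J).isOpen_compl
    · rw [← interior_eq_empty_iff_dense_compl, ← Set.not_nonempty_iff_eq_empty]
      exact fun hint => hnot J hJ (le_radical_of_isAdic_of_nonempty_interior hI hint)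
  obtain ⟨x, hxI, hx⟩ := hdense.inter_open_nonempty I (isOpen_of_isAdic hI) ⟨0, I.zero_mem⟩
  rw [← Set.compl_iUnion₂] at hx
  exact hx (hIS hxI)

theorem not_le_of_mem_minimalPrimes_span_singleton (hI : 1 < I.height) {x : A} {p : Ideal A}
    (hp : p ∈ (Ideal.span {x}).minimalPrimes) : ¬ I ≤ p := fun hIp =>
  have : p.IsPrime := hp.1.1
  have hp_height : p.height ≤ 1 :=
    Ideal.height_le_one_of_isPrincipal_of_mem_minimalPrimes (Ideal.span {x}) p hp
  hI.not_ge ((Ideal.height_mono hIp).trans hp_height)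

theorem not_countable_range_radical_span_singleton [IsAdicComplete I A] (hI_ne : I ≠ ⊤)
    (hI : 1 < I.height) :
    ¬ (Set.range fun x : A => (Ideal.span {x}).radical).Countable := by
  intro hcount
  let S : Set (Ideal A) := ⋃ x : A, (Ideal.span {x}).minimalPrimes
  have hS : S.Countable := by
    have hS_eq : S = ⋃ J ∈ Set.range fun x : A => (Ideal.span {x}).radical, J.minimalPrimes := by
      simp only [S, Set.biUnion_range, Ideal.radical_minimalPrimes]
    rw [hS_eq]
    exact hcount.biUnion fun J _ => (J.finite_minimalPrimes_of_isNoetherianRing A).countable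
  have hIS : (I : Set A) ⊆ ⋃ p ∈ S, (p : Set A) := by
    intro x hx
    have hx_ne : Ideal.span {x} ≠ ⊤ :=
      ne_top_of_le_ne_top hI_ne ((Ideal.span_singleton_le_iff_mem I).mpr hx)
    obtain ⟨p, hp⟩ := Ideal.nonempty_minimalPrimes hx_ne
    exact Set.mem_biUnion (Set.mem_iUnion.mpr ⟨x, hp⟩) (hp.1.2 (Ideal.mem_span_singleton_self x))
  obtain ⟨p, hpS, hIp⟩ := exists_le_radical_of_subset_biUnion_of_countable hS hIS
  obtain ⟨x, hp⟩ := Set.mem_iUnion.mp hpS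
  rw [hp.1.1.radical] at hIp
  exact not_le_of_mem_minimalPrimes_span_singleton hI hp hIp

end Noetherian

theorem uncountable_family_with_distinct_radicals_general.{u}
    {A : Type u} [CommRing A] [IsNoetherianRing A] (I : Ideal A) [IsAdicComplete I A]
    (hI_ne : I ≠ ⊤) (hI : 2 ≤ I.height) :
    ∃ (U : Type u) (a : U → A), ¬ Countable U ∧
      ∀ u v : U, u ≠ v →
        (Ideal.span {a u}).radical ≠ (Ideal.span {a v}).radical := by
  let rad : A → Ideal A := fun x => (Ideal.span {x}).radical
  have hI_one : 1 < I.height := lt_of_lt_of_le (by norm_num) hI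
  refine ⟨Set.range rad, Set.rangeSplitting rad,
    not_countable_range_radical_span_singleton hI_ne hI_one, fun u v huv h => huv ?_⟩
  rw [Subtype.ext_iff, ← Set.apply_rangeSplitting rad u, ← Set.apply_rangeSplitting rad v]
  exact h

/-- Let `A` be a complete commutative noetherian local ring of Krull dimension at
least `2`. Then there is an uncountable family `(a_u)` of elements of `A` such that
the radicals of the principal ideals `(a_u)` are pairwise distinct. -/
theorem uncountable_family_with_distinct_radicals
    (A : Type) [CommRing A] [IsNoetherianRing A] [IsLocalRing A]
    [IsAdicComplete (IsLocalRing.maximalIdeal A) A]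
    (h : 2 ≤ ringKrullDim A) :
    ∃ (U : Type) (a : U → A), ¬ Countable U ∧
      ∀ u v : U, u ≠ v →
        (Ideal.span {a u}).radical ≠ (Ideal.span {a v}).radical := by
  rw [← IsLocalRing.maximalIdeal_height_eq_ringKrullDim] at h
  exact uncountable_family_with_distinct_radicals_general (IsLocalRing.maximalIdeal A)
    Ideal.IsPrime.ne_top' (WithBot.coe_le_coe.mp h)
end
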